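/- Convergence of telescoping series (Theorem 4.3): Let p, q, r ∈ (0,∞], θ ∈ (0, min{p,r}], and let {t_k} ∈ X^{α₃}_{α,σ,p} be a p-admissible weight sequence with σ₁ = θ·p̄_θ (p̄_θ the conjugate exponent of p_θ := p/θ), α₁ > n·(1/θ − 1/r), σ₂ ∈ (0,∞], α₃ ≥ 0, and let {t_{k,m}} be its associated multiple sequence. Suppose V_k ∈ L_r^{loc}(ℝⁿ) for k ∈ ℕ₀, set v_k := V_k − V_{k−1} (with V_{−1} ≡ 0), and assume A := (Σ_{k=0}^∞ (Σ_{m∈ℤⁿ} t^p_{k,m}·2^{knp/θ}·‖v_k‖^p_{L_r(Q^n_{k,m})})^{q/p})^{1/q} < ∞. Then the series Σ_{k=0}^∞ v_k converges in L_r^{loc}(ℝⁿ) to a function φ, and (Σ_{k=0}^∞ (Σ_{m∈ℤⁿ} t^p_{k,m}·2^{knp/r}·‖φ − V_k‖^p_{L_r(Q^n_{k,m})})^{q/p})^{1/q} + (Σ_{m∈ℤⁿ} t^p_{0,m}·‖φ‖^p_{L_r(Q^n_{0,m})})^{1/p} ≤ C·A, with C > 0 independent of the sequence {V_k} (usual modifications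 for p, q = ∞). -/

import Mathlib

open MeasureTheory ENNReal Filter
open scoped Classical

noncomputable section

/-- `ℓ_q` quasinorm of a family of extended nonnegative reals (supremum when `q = ∞`). -/
def lqNorm {ι : Type*} (q : ℝ≥0∞) (c : ι → ℝ≥0∞) : ℝ≥0∞ :=
  if q = ∞ then ⨆ i, c i else (∑' i, c i ^ q.toReal) ^ (1 / q.toReal)

/-- `L_p` quasinorm of an `ℝ≥0∞`-valued function (essential supremum when `p = ∞`). -/
def lpNormE {α : Type*} [MeasurableSpace α] (p : ℝ≥0∞) (μ : Measure α) (f : α → ℝ≥0∞) : ℝ≥0∞ :=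
  if p = ∞ then essSup f μ else (∫⁻ x, f x ^ p.toReal ∂μ) ^ (1 / p.toReal)

abbrev Rn (n : ℕ) := Fin n → ℝ

/-- Open cube centred at `x` of half-side `s` (i.e. `x + s·Iⁿ`). -/
def openCube {n : ℕ} (x : Rn n) (s : ℝ) : Set (Rn n) := {y | ∀ i, |y i - x i| < s}

/-- Open axis-parallel cube with lower corner `c` and side `s`. -/
def cubeAt {n : ℕ} (c : Rn n) (s : ℝ) : Set (Rn n) := {x | ∀ i, c i < x i ∧ x i < c i + s}

/-- Open dyadic cube `Q^n_{k,m}` of side `2^{-k}`. -/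
def dyadicCube (n k : ℕ) (m : Fin n → ℤ) : Set (Rn n) :=
  {x | ∀ i, (m i : ℝ) / 2 ^ k < x i ∧ x i < ((m i : ℝ) + 1) / 2 ^ k}

/-- Half-open dyadic cube `Q̃^n_{k,m}`. -/
def dyadicCubeHalf (n k : ℕ) (m : Fin n → ℤ) : Set (Rn n) :=
  {x | ∀ i, (m i : ℝ) / 2 ^ k ≤ x i ∧ x i < ((m i : ℝ) + 1) / 2 ^ k}

def dyadicCenter (n k : ℕ) (m : Fin n → ℤ) : Rn n := fun i => ((m i : ℝ) + 1 / 2) / 2 ^ k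

/-- The concentric dilate `c·Q^n_{k,m}` of a dyadic cube. -/
def dilatedCube (n k : ℕ) (m : Fin n → ℤ) (c : ℝ) : Set (Rn n) :=
  openCube (dyadicCenter n k m) (c / 2 ^ (k + 1))

def euclNorm {d : ℕ} (y : Rn d) : ℝ := Real.sqrt (∑ i, y i ^ 2)

/-- The difference `Δ^l(h)g(x)`. -/
def diffl {n : ℕ} (l : ℕ) (h : Rn n) (g : Rn n → ℝ) (x : Rn n) : ℝ :=
  ∑ j ∈ Finset.range (l + 1), ((l.choose j : ℝ) * (-1 : ℝ) ^ (l + j)) * g (x + (j : ℝ) • h)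

/-- The difference `Δ^l(h,Ω)g(x)`, vanishing unless the segment `[x, x + l·h]` lies in `Ω`. -/
def difflOn {n : ℕ} (l : ℕ) (Ω : Set (Rn n)) (h : Rn n) (g : Rn n → ℝ) (x : Rn n) : ℝ :=
  if ∀ τ ∈ Set.Icc (0 : ℝ) 1, x + (τ * l) • h ∈ Ω then diffl l h g x else 0

/-- `δ^l_r(Q)g`, where `s` is the side length of the cube `Q`. -/
def deltaE (n l : ℕ) (r : ℝ≥0∞) (s : ℝ) (Q : Set (Rn n)) (g : Rn n → ℝ) : ℝ≥0∞ :=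
  ENNReal.ofReal s ^ (-(2 * (n : ℝ)) / r.toReal) *
    eLpNorm (fun hx : Rn n × Rn n => diffl l hx.1 g hx.2) r
      ((volume.restrict (openCube (0 : Rn n) s)).prod (volume.restrict Q))

/-- `δ^l_r(Q,Ω)g`, where `s` is the side length of the cube `Q`. -/
def deltaEOn (n l : ℕ) (r : ℝ≥0∞) (s : ℝ) (Q Ω : Set (Rn n)) (g : Rn n → ℝ) : ℝ≥0∞ :=
  ENNReal.ofReal s ^ (-(2 * (n : ℝ)) / r.toReal) *
    eLpNorm (fun hx : Rn n × Rn n => difflOn l Ω hx.1 g hx.2) r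
      ((volume.restrict (openCube (0 : Rn n) s)).prod (volume.restrict Q))

/-- `Δ̄^l_r(s)g(x)`. -/
def barDelta (n l : ℕ) (r : ℝ≥0∞) (s : ℝ) (g : Rn n → ℝ) (x : Rn n) : ℝ≥0∞ :=
  ENNReal.ofReal s ^ (-(n : ℝ) / r.toReal) *
    eLpNorm (fun h : Rn n => diffl l h g x) r (volume.restrict (openCube (0 : Rn n) s))

/-- Membership in `L_r^{loc}(ℝⁿ)`. -/
def MemLrLoc (n : ℕ) (r : ℝ≥0∞) (φ : Rn n → ℝ) : Prop :=
  Measurable φ ∧ ∀ K : Set (Rn n), IsCompact K → eLpNorm φ r (volume.restrict K) < ∞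

def IsWeight {n : ℕ} (w : Rn n → ℝ) : Prop := Measurable w ∧ ∀ x, 0 < w x

/-- A `p`-admissible weight sequence. -/
def pAdmissible (n : ℕ) (p : ℝ≥0∞) (t : ℕ → Rn n → ℝ) : Prop :=
  ∀ k, IsWeight (t k) ∧ MemLrLoc n p (t k)

/-- The multiple sequence `t_{k,m} = ‖t_k‖_{L_p(Q^n_{k,m})}` associated with a weight sequence. -/
def tkm (n : ℕ) (p : ℝ≥0∞) (t : ℕ → Rn n → ℝ) (k : ℕ) (m : Fin n → ℤ) : ℝ≥0∞ :=
  eLpNorm (t k) p (volume.restrict (dyadicCube n k m))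

/-- The weight `t̄_k` built from a multiple sequence `T`. -/
def tbarOf (n : ℕ) (p : ℝ≥0∞) (T : ℕ → (Fin n → ℤ) → ℝ≥0∞) (k : ℕ) (x : Rn n) : ℝ≥0∞ :=
  (2 : ℝ≥0∞) ^ (((k * n : ℕ) : ℝ) / p.toReal) *
    ∑' m : Fin n → ℤ, (dyadicCubeHalf n k m).indicator (fun _ => T k m) x

/-- `(2^{kn} ∫_Q f^e)^{1/e}`, with the essential supremum modification for `e = ∞`. -/
def avgNorm (n k : ℕ) (e : ℝ≥0∞) (Q : Set (Rn n)) (f : Rn n → ℝ≥0∞) : ℝ≥0∞ :=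
  if e = ∞ then essSup f (volume.restrict Q)
  else ((2 : ℝ≥0∞) ^ (k * n) * ∫⁻ x in Q, f x ^ e.toReal) ^ (1 / e.toReal)

/-- Conditions (2.14)–(2.16) of the class `X^{α₃}_{α,σ,p}`, expressed for a multiple
sequence `T`. -/
def MemXseq (n : ℕ) (α₁ α₂ α₃ : ℝ) (σ₁ σ₂ p : ℝ≥0∞) (T : ℕ → (Fin n → ℤ) → ℝ≥0∞) : Prop :=
  (∃ C₁ : ℝ≥0∞, 0 < C₁ ∧ C₁ < ∞ ∧ ∀ k j : ℕ, k ≤ j → ∀ m : Fin n → ℤ,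
    avgNorm n k p (dyadicCube n k m) (tbarOf n p T k) *
      avgNorm n k σ₁ (dyadicCube n k m) (fun x => (tbarOf n p T j x)⁻¹) ≤
      C₁ * (2 : ℝ≥0∞) ^ (α₁ * ((k : ℝ) - (j : ℝ)))) ∧
  (∃ C₂ : ℝ≥0∞, 0 < C₂ ∧ C₂ < ∞ ∧ ∀ k j : ℕ, k ≤ j → ∀ m : Fin n → ℤ,
    (avgNorm n k p (dyadicCube n k m) (tbarOf n p T k))⁻¹ *
      avgNorm n k σ₂ (dyadicCube n k m) (tbarOf n p T j) ≤
      C₂ * (2 : ℝ≥0∞) ^ (α₂ * ((j : ℝ) - (k : ℝ)))) ∧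
  (∀ k : ℕ, ∀ m m' : Fin n → ℤ, (∀ i, |m i - m' i| ≤ 1) →
    0 < T k m ∧ T k m ≤ (2 : ℝ≥0∞) ^ (α₃ : ℝ) * T k m')

/-- The weighted class `X^{α₃}_{α,σ,p}` of weight sequences. -/
def MemX (n : ℕ) (α₁ α₂ α₃ : ℝ) (σ₁ σ₂ p : ℝ≥0∞) (t : ℕ → Rn n → ℝ) : Prop :=
  pAdmissible n p t ∧ MemXseq n α₁ α₂ α₃ σ₁ σ₂ p (tkm n p t)

/-- Quasinorm of `B̃^l_{p,q,r}(ℝⁿ, T)` with an `ℝ≥0∞`-valued weight sequence `T`. -/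
def tildeBnormE (n l : ℕ) (p q r : ℝ≥0∞) (T : ℕ → Rn n → ℝ≥0∞) (φ : Rn n → ℝ) : ℝ≥0∞ :=
  lqNorm q (fun k : ℕ =>
    lpNormE p volume (fun x =>
      T (k + 1) x *
        deltaE n l r ((2 : ℝ) ^ (1 - ((k : ℤ) + 1))) (openCube x ((2 : ℝ) ^ (-((k : ℤ) + 1)))) φ)) +
  lpNormE p volume (fun x => T 0 x * eLpNorm φ r (volume.restrict (openCube x 1)))

/-- Quasinorm of `B̃^l_{p,q,r}(ℝⁿ, {t_k})`. -/
def tildeBnorm (n l : ℕ) (p q r : ℝ≥0∞) (t : ℕ → Rn n → ℝ) (φ : Rn n → ℝ) : ℝ≥0∞ :=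
  tildeBnormE n l p q r (fun k x => ENNReal.ofReal (t k x)) φ

/-- Membership in `B̃^l_{p,q,r}(ℝⁿ, {t_k})`. -/
def MemTildeB (n l : ℕ) (p q r : ℝ≥0∞) (t : ℕ → Rn n → ℝ) (φ : Rn n → ℝ) : Prop :=
  MemLrLoc n r φ ∧ tildeBnorm n l p q r t φ < ∞

/-- Quasinorm of `B̄^l_{p,q,r}(ℝⁿ, {t_k})`. -/
def barBnorm (n l : ℕ) (p q r : ℝ≥0∞) (t : ℕ → Rn n → ℝ) (φ : Rn n → ℝ) : ℝ≥0∞ :=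
  lqNorm q (fun k : ℕ =>
    lpNormE p volume (fun x =>
      ENNReal.ofReal (t (k + 1) x) * barDelta n l r ((2 : ℝ) ^ (-((k : ℤ) + 1))) φ x)) +
  lpNormE p volume (fun x => ENNReal.ofReal (t 0 x) * eLpNorm φ r (volume.restrict (openCube x 1)))

/-- Membership in `B̄^l_{p,q,r}(ℝⁿ, {t_k})`. -/
def MemBarB (n l : ℕ) (p q r : ℝ≥0∞) (t : ℕ → Rn n → ℝ) (φ : Rn n → ℝ) : Prop :=
  MemLrLoc n r φ ∧ barBnorm n l p q r t φ < ∞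

/-- The class `A^{loc}_∞`. -/
def MemAlocInfty (n : ℕ) (w : Rn n → ℝ) : Prop :=
  ∃ α : ℝ, α ∈ Set.Ioo (0 : ℝ) 1 ∧ ∃ M : ℝ≥0∞, M < ∞ ∧
    ∀ (c : Rn n) (s : ℝ), 0 < s → s ≤ 1 →
      ∀ F : Set (Rn n), F ⊆ cubeAt c s → MeasurableSet F →
        ENNReal.ofReal α * volume (cubeAt c s) ≤ volume F →
        (∫⁻ x in cubeAt c s, ENNReal.ofReal (w x)) ≤ M * ∫⁻ x in F, ENNReal.ofReal (w x)

/-- The class `A^{loc}_1`. -/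
def MemAloc1 (n : ℕ) (w : Rn n → ℝ) : Prop :=
  ∃ C : ℝ≥0∞, C < ∞ ∧ ∀ (c : Rn n) (s : ℝ), 0 < s → s ≤ 1 →
    ∀ᵐ x ∂volume.restrict (cubeAt c s),
      (∫⁻ y in cubeAt c s, ENNReal.ofReal (w y)) ≤ C * volume (cubeAt c s) * ENNReal.ofReal (w x)

/-- The class `A^{loc}_{p₀}` for `p₀ > 1`. -/
def MemAlocGt (n : ℕ) (p₀ : ℝ) (w : Rn n → ℝ) : Prop :=
  ∃ C : ℝ≥0∞, C < ∞ ∧ ∀ (c : Rn n) (s : ℝ), 0 < s → s ≤ 1 →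
    ((volume (cubeAt c s))⁻¹ * ∫⁻ y in cubeAt c s, ENNReal.ofReal (w y)) *
      ((volume (cubeAt c s))⁻¹ *
        ∫⁻ y in cubeAt c s, ENNReal.ofReal (w y) ^ (-(1 : ℝ) / (p₀ - 1))) ^ (p₀ - 1) ≤ C

/-- The class `A^{loc}_{p₀}` for `p₀ ∈ [1,∞)`. -/
def MemAlocP (n : ℕ) (p₀ : ℝ) (w : Rn n → ℝ) : Prop :=
  if p₀ = 1 then MemAloc1 n w else MemAlocGt n p₀ w

/-- The class `{}^{loc}Y^{α₃}_{α₁,α₂}` of weight sequences of variable smoothness. -/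
def MemLocY (n : ℕ) (α₁ α₂ α₃ : ℝ) (s : ℕ → Rn n → ℝ) : Prop :=
  (∀ k, IsWeight (s k)) ∧
  (∃ C : ℝ, 0 < C ∧ ∀ j k : ℕ, j ≤ k → ∀ x : Rn n,
    C⁻¹ * (2 : ℝ) ^ (α₁ * ((k : ℝ) - (j : ℝ))) ≤ s k x / s j x ∧
      s k x / s j x ≤ C * (2 : ℝ) ^ (α₂ * ((k : ℝ) - (j : ℝ)))) ∧
  (∀ k : ℕ, ∀ x y : Rn n, euclNorm (x - y) ≤ (2 : ℝ) ^ (-(k : ℤ)) →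
    s k x ≤ (2 : ℝ) ^ α₃ * s k y)

/-- The set `Ξ^{d,n}_{k,m} = Q^n_{k,m} × (2^{-k}B^d ∖ 2^{-k-1}B^d) ⊂ ℝ^{n+d}`. -/
def Xi (n d k : ℕ) (m : Fin n → ℤ) : Set (Rn (n + d)) :=
  {z | (fun i => z (Fin.castAdd d i)) ∈ dyadicCube n k m ∧
       euclNorm (fun i : Fin d => z (Fin.natAdd n i)) < (2 : ℝ) ^ (-(k : ℤ)) ∧
       (2 : ℝ) ^ (-(k : ℤ) - 1) ≤ euclNorm (fun i : Fin d => z (Fin.natAdd n i))}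

/-- The multiple sequence `γ̂_{k,m} = ‖γ‖_{L_p(Ξ^{d,n}_{k,m})}` generated by a weight `γ`. -/
def gammaHat (n d : ℕ) (p : ℝ≥0∞) (γ : Rn (n + d) → ℝ) (k : ℕ) (m : Fin n → ℤ) : ℝ≥0∞ :=
  eLpNorm γ p (volume.restrict (Xi n d k m))

def delta1Good (n d : ℕ) (p : ℝ≥0∞) (γ : Rn (n + d) → ℝ) (δ : ℝ) : Prop :=
  ∃ C : ℝ≥0∞, C < ∞ ∧ ∀ k j : ℕ, k ≤ j → ∀ m : Fin n → ℤ,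
    (∑' m' : {m' : Fin n → ℤ // dyadicCube n j m' ⊆ dyadicCube n k m},
        gammaHat n d p γ j m'.1 ^ p.toReal) ≤
      C * (2 : ℝ≥0∞) ^ ((((k : ℝ) - (j : ℝ)) * (d : ℝ)) * δ) * gammaHat n d p γ k m ^ p.toReal

/-- `δ₁(γ,n,d)`. -/
def delta1 (n d : ℕ) (p : ℝ≥0∞) (γ : Rn (n + d) → ℝ) : ℝ :=
  sSup {δ : ℝ | 0 < δ ∧ delta1Good n d p γ δ}

def delta2Good (n d : ℕ) (p : ℝ≥0∞) (γ : Rn (n + d) → ℝ) (δ : ℝ) : Prop :=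
  ∃ C : ℝ≥0∞, C < ∞ ∧ ∀ k j : ℕ, k ≤ j → ∀ m : Fin n → ℤ,
    ∀ G : Set (Fin n → ℤ), (∀ m' ∈ G, dyadicCube n j m' ⊆ dyadicCube n k m) →
      (∑' m' : G, gammaHat n d p γ j m'.1 ^ p.toReal) ≤
        C * (volume (⋃ m' ∈ G, dyadicCube n j m') / volume (dyadicCube n k m)) ^ δ *
          ∑' m' : {m' : Fin n → ℤ // dyadicCube n j m' ⊆ dyadicCube n k m},
            gammaHat n d p γ j m'.1 ^ p.toReal

/-- `δ₂(γ,n,d)`. -/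
def delta2 (n d : ℕ) (p : ℝ≥0∞) (γ : Rn (n + d) → ℝ) : ℝ :=
  sSup {δ : ℝ | 0 < δ ∧ delta2Good n d p γ δ}

/-- The cardinal B-spline of degree `deg` with knots `0, 1, …, deg + 1`. -/
def cardB : ℕ → ℝ → ℝ
  | 0, x => if 0 ≤ x ∧ x < 1 then 1 else 0
  | (d + 1), x => (x / (d + 1)) * cardB d x + (((d : ℝ) + 2 - x) / (d + 1)) * cardB d (x - 1)

/-- The tensor-product B-spline `N^{deg}_{k,m}` on `ℝⁿ`. -/
def Bspl (n deg k : ℕ) (m : Fin n → ℤ) (x : Rn n) : ℝ :=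
  ∏ i, cardB deg (2 ^ k * x i - (m i : ℝ))

/-- The spline `Σ_m β_m N^{deg}_{k,m}`. -/
def splineSum (n deg k : ℕ) (β : (Fin n → ℤ) → ℝ) (x : Rn n) : ℝ :=
  ∑' m, β m * Bspl n deg k m x

/-- A dyadic spline of degree `deg` (an element of `Σ^{deg} = ⋃_k Σ^{deg}_k`). -/
def IsSplineFn (n deg : ℕ) (S : Rn n → ℝ) : Prop :=
  ∃ (k : ℕ) (β : (Fin n → ℤ) → ℝ), S = splineSum n deg k β

/-- The weighted best spline approximation `s_k(φ)` by splines of degree `deg`. -/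
def sApprox (n deg : ℕ) (p r : ℝ≥0∞) (T : ℕ → (Fin n → ℤ) → ℝ≥0∞) (φ : Rn n → ℝ) (k : ℕ) :
    ℝ≥0∞ :=
  ⨅ β : (Fin n → ℤ) → ℝ,
    lqNorm p (fun m => T k m *
      eLpNorm (fun x => φ x - splineSum n deg k β x) r (volume.restrict (dyadicCube n k m)))

/-- `s_j(φ)` for `j ∈ {-1, 0, 1, 2, …}`, including the term `s_{-1}`. -/
def sApproxZ (n deg : ℕ) (p r : ℝ≥0∞) (T : ℕ → (Fin n → ℤ) → ℝ≥0∞) (φ : Rn n → ℝ) (j : ℤ) :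
    ℝ≥0∞ :=
  if j < 0 then
    lqNorm p (fun m => T 0 m * eLpNorm φ r (volume.restrict (dyadicCube n 0 m)))
  else sApprox n deg p r T φ j.toNat

/-- Local best polynomial approximation `E_l(φ,Q)_r` by polynomials of total degree `< l`. -/
def bestApproxE (n l : ℕ) (r : ℝ≥0∞) (φ : Rn n → ℝ) (Q : Set (Rn n)) : ℝ≥0∞ :=
  ⨅ P : {P : MvPolynomial (Fin n) ℝ // P.totalDegree < l},
    eLpNorm (fun x => φ x - MvPolynomial.eval x P.1) r (volume.restrict Q)

/-- The modulus of continuity `ω_l(φ,Q)_r`. -/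
def modulusE (n l : ℕ) (r : ℝ≥0∞) (φ : Rn n → ℝ) (Q : Set (Rn n)) : ℝ≥0∞ :=
  ⨆ h : Rn n, eLpNorm (difflOn l Q h φ) r (volume : Measure (Rn n))

def partialDeriv {N : ℕ} (i : Fin N) (ψ : Rn N → ℝ) : Rn N → ℝ :=
  fun x => fderiv ℝ ψ x (Pi.single i 1)

def iterPD {N : ℕ} : List (Fin N) → (Rn N → ℝ) → Rn N → ℝ
  | [], ψ => ψ
  | i :: L, ψ => partialDeriv i (iterPD L ψ)

def multiIdxList {N : ℕ} (α : Fin N → ℕ) : List (Fin N) :=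
  (List.finRange N).foldr (fun i L => List.replicate (α i) i ++ L) []

/-- Iterated partial derivative `D^α`. -/
def multiDeriv {N : ℕ} (α : Fin N → ℕ) (ψ : Rn N → ℝ) : Rn N → ℝ :=
  iterPD (multiIdxList α) ψ

/-- `g` is the weak (Sobolev) derivative `D^α f`. -/
def IsWeakDeriv {N : ℕ} (α : Fin N → ℕ) (f g : Rn N → ℝ) : Prop :=
  ∀ ψ : Rn N → ℝ, ContDiff ℝ (⊤ : ℕ∞) ψ → HasCompactSupport ψ →
    ∫ x, f x * multiDeriv α ψ x = (-1 : ℝ) ^ (∑ i, α i) * ∫ x, g x * ψ x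

/-- The weighted Sobolev norm `Σ_{|α| ≤ l} ‖γ · D^α f‖_{L_p}` computed from a system `D` of
weak derivatives. -/
def sobNorm (N : ℕ) (p : ℝ≥0∞) (l : ℕ) (γ : Rn N → ℝ) (D : (Fin N → ℕ) → Rn N → ℝ) : ℝ≥0∞ :=
  ∑' α : Fin N → ℕ,
    if (∑ i, α i) ≤ l then eLpNorm (fun x => γ x * D α x) p volume else 0

/-- Membership in the weighted Sobolev space `W^l_p(ℝ^N, γ)`, witnessed by the system `D`
of weak derivatives of `f`. -/
def MemW (N : ℕ) (p : ℝ≥0∞) (l : ℕ) (γ : Rn N → ℝ) (f : Rn N → ℝ)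
    (D : (Fin N → ℕ) → Rn N → ℝ) : Prop :=
  MeasureTheory.LocallyIntegrable f volume ∧ D 0 = f ∧
    (∀ α : Fin N → ℕ, (∑ i, α i) ≤ l →
      MeasureTheory.LocallyIntegrable (D α) volume ∧ IsWeakDeriv α f (D α)) ∧
    sobNorm N p l γ D < ∞

/-- `φ` is the trace of `f` on the plane `y = 0`. -/
def IsTraceSob {n d : ℕ} (f : Rn (n + d) → ℝ) (φ : Rn n → ℝ) : Prop :=
  ∃ f' : Rn (n + d) → ℝ, f' =ᵐ[volume] f ∧
    ∀ (c : Rn n) (s : ℝ), 0 < s →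
      Filter.Tendsto (fun y : Rn d => ∫ x in cubeAt c s, |f' (Fin.append x y) - φ x|)
        (nhds 0) (nhds 0)

/-- The weight sequence `γ_k(x) = 2^{k(l+n/p)} Σ_m χ_{Q̃^n_{k,m}}(x) γ̂_{k,m}`. -/
def gammaSeq (n d : ℕ) (p : ℝ≥0∞) (l : ℕ) (γ : Rn (n + d) → ℝ) (k : ℕ) (x : Rn n) : ℝ≥0∞ :=
  (2 : ℝ≥0∞) ^ ((k : ℝ) * ((l : ℝ) + (n : ℝ) / p.toReal)) *
    ∑' m : Fin n → ℤ, (dyadicCubeHalf n k m).indicator (fun _ => gammaHat n d p γ k m) x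

/-- Conjugate exponent in `ℝ≥0∞`. -/
def conjE (e : ℝ≥0∞) : ℝ≥0∞ := (1 - e⁻¹)⁻¹

/-- The exponent `p_θ`. -/
def pTheta (p θ : ℝ≥0∞) : ℝ≥0∞ := if θ = ∞ ∧ p = ∞ then 1 else p / θ

/-- The telescoping differences `v_k = V_k - V_{k-1}` (with `V_{-1} ≡ 0`). -/
def vseq {n : ℕ} (V : ℕ → Rn n → ℝ) (k : ℕ) (x : Rn n) : ℝ :=
  if k = 0 then V 0 x else V k x - V (k - 1) x

/-!
Hölder's inequality over the children of a dyadic cube, together with the condition on the weight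
averages, gives the refinement estimate `‖v‖_k ≤ C₁ 2^{-α₁ d} ‖v‖_{k+d}`, where `‖v‖_k` denotes the
`ℓ_p` norm over `m` of `2^{kn/θ} T_{k,m} ‖v‖_{L_r(Q_{k,m})}`. For `ρ ≤ min(1, q, θ)` all the
quasinorms involved are `ρ`-subadditive, so the tail `φ - V_k = ∑_{j > k} v_j` satisfies
`‖φ - V_k‖_k ≤ (∑_i (C₁ 2^{-α₁ i} ‖v_{k+i}‖_{k+i})^ρ)^{1/ρ}`, and taking the `ℓ_q` norm over `k`
(a discrete Hardy inequality) costs only the `ℓ_ρ` norm of a geometric sequence. At level `0` the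
same estimate makes `∑_j ‖v_j‖_{L_r(Q)}^ρ` finite for every unit cube `Q`, which yields convergence
almost everywhere and in `L_r` on compact sets.
-/

section LqNorm

variable {ι κ : Type*} {p q s σ θ : ℝ≥0∞}

lemma lqNorm_top (c : ι → ℝ≥0∞) : lqNorm ∞ c = ⨆ i, c i := if_pos rfl

lemma lqNorm_of_ne_top (hq : q ≠ ∞) (c : ι → ℝ≥0∞) :
    lqNorm q c = (∑' i, c i ^ q.toReal) ^ (1 / q.toReal) := if_neg hq

lemma lqNorm_rpow_toReal (hq0 : q ≠ 0) (hq : q ≠ ∞) (c : ι → ℝ≥0∞) :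
    lqNorm q c ^ q.toReal = ∑' i, c i ^ q.toReal := by
  rw [lqNorm_of_ne_top hq, one_div, ENNReal.rpow_inv_rpow (ENNReal.toReal_pos hq0 hq).ne']

lemma lqNorm_one (c : ι → ℝ≥0∞) : lqNorm 1 c = ∑' i, c i := by
  simp [lqNorm_of_ne_top]

lemma lqNorm_mono {c d : ι → ℝ≥0∞} (h : ∀ i, c i ≤ d i) : lqNorm q c ≤ lqNorm q d := by
  unfold lqNorm
  split_ifs
  · exact iSup_mono h
  · gcongr
    exact h _

lemma le_lqNorm (hq : q ≠ 0) (c : ι → ℝ≥0∞) (i : ι) : c i ≤ lqNorm q c := by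
  rcases eq_or_ne q ∞ with rfl | hq'
  · exact lqNorm_top c ▸ le_iSup c i
  · rw [← ENNReal.rpow_le_rpow_iff (ENNReal.toReal_pos hq hq'), lqNorm_rpow_toReal hq hq']
    exact ENNReal.le_tsum (f := fun i => c i ^ q.toReal) i

lemma lqNorm_const_mul (hq : q ≠ 0) (a : ℝ≥0∞) (c : ι → ℝ≥0∞) :
    lqNorm q (fun i => a * c i) = a * lqNorm q c := by
  rcases eq_or_ne q ∞ with rfl | hq'
  · simp only [lqNorm_top, ENNReal.mul_iSup]
  · have hq0 : 0 < q.toReal := ENNReal.toReal_pos hq hq'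
    simp only [lqNorm_of_ne_top hq', ENNReal.mul_rpow_of_nonneg _ _ hq0.le, ENNReal.tsum_mul_left,
      one_div, ENNReal.mul_rpow_of_nonneg _ _ (inv_pos.2 hq0).le, ENNReal.rpow_rpow_inv hq0.ne']

lemma lqNorm_comp_le {e : κ → ι} (he : Function.Injective e) (c : ι → ℝ≥0∞) :
    lqNorm q (fun j => c (e j)) ≤ lqNorm q c := by
  unfold lqNorm
  split_ifs
  · exact iSup_le fun j => le_iSup c (e j)
  · gcongr
    exact ENNReal.tsum_comp_le_tsum_of_injective he fun i => c i ^ q.toReal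

lemma lqNorm_anti (hs : s ≠ 0) (hsq : s ≤ q) (c : ι → ℝ≥0∞) : lqNorm q c ≤ lqNorm s c := by
  rcases eq_or_ne q ∞ with rfl | hq
  · exact lqNorm_top c ▸ iSup_le fun i => le_lqNorm hs c i
  have hs' : s ≠ ∞ := ne_top_of_le_ne_top hq hsq
  have hs0 : 0 < s.toReal := ENNReal.toReal_pos hs hs'
  obtain ⟨d, hd, hqs⟩ : ∃ d, 0 ≤ d ∧ q.toReal = s.toReal + d :=
    ⟨_, sub_nonneg.2 (ENNReal.toReal_mono hq hsq), by ring⟩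
  have hq0 : 0 < q.toReal := hqs ▸ add_pos_of_pos_of_nonneg hs0 hd
  rw [lqNorm_of_ne_top hq, one_div, ENNReal.rpow_inv_le_iff hq0]
  calc ∑' i, c i ^ q.toReal
      = ∑' i, c i ^ s.toReal * c i ^ d := by
        simp only [hqs, ENNReal.rpow_add_of_nonneg _ _ hs0.le hd]
    _ ≤ ∑' i, c i ^ s.toReal * lqNorm s c ^ d := by
        gcongr with i
        exact le_lqNorm hs c i
    _ = lqNorm s c ^ q.toReal := by
        rw [ENNReal.tsum_mul_right, ← lqNorm_rpow_toReal hs hs', hqs,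
          ENNReal.rpow_add_of_nonneg _ _ hs0.le hd]

lemma tsum_le_lqNorm (hs : s ≠ 0) (hs1 : s ≤ 1) (c : ι → ℝ≥0∞) : ∑' i, c i ≤ lqNorm s c :=
  lqNorm_one c ▸ lqNorm_anti hs hs1 c

lemma lqNorm_ne_top_of_finite [Finite ι] (hq : q ≠ 0) {c : ι → ℝ≥0∞} (hc : ∀ i, c i ≠ ∞) :
    lqNorm q c ≠ ∞ := by
  have := Fintype.ofFinite ι
  refine ne_top_of_le_ne_top (b := lqNorm (min q 1) c) ?_
    (lqNorm_anti (by simp [hq]) (min_le_left _ _) c)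
  have hq' : min q 1 ≠ ∞ := by simp
  rw [lqNorm_of_ne_top hq', tsum_fintype]
  exact ENNReal.rpow_ne_top_of_nonneg (by positivity) (ENNReal.sum_ne_top.2 fun i _ =>
    ENNReal.rpow_ne_top_of_nonneg (by positivity) (hc i))

lemma lqNorm_fiber (hq : q ≠ 0) (π : ι → κ) (c : ι → ℝ≥0∞) :
    lqNorm q (fun j => lqNorm q fun i : {i // π i = j} => c i) = lqNorm q c := by
  rcases eq_or_ne q ∞ with rfl | hq'
  · simp only [lqNorm_top, ← (Equiv.sigmaFiberEquiv π).iSup_comp (g := c), iSup_sigma]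
    rfl
  · rw [lqNorm_of_ne_top hq', lqNorm_of_ne_top hq']
    simp only [lqNorm_rpow_toReal hq hq']
    rw [← (Equiv.sigmaFiberEquiv π).tsum_eq, ← ENNReal.tsum_sigma]
    rfl

lemma tendsto_lqNorm_add_atTop (hq0 : q ≠ 0) (hq : q ≠ ∞) {c : ℕ → ℝ≥0∞} (hc : lqNorm q c ≠ ∞) :
    Tendsto (fun N => lqNorm q fun i => c (i + N)) atTop (nhds 0) := by
  have hq' : 0 < q.toReal := ENNReal.toReal_pos hq0 hq
  have hsum : ∑' i, c i ^ q.toReal ≠ ∞ :=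
    lqNorm_rpow_toReal hq0 hq c ▸ ENNReal.rpow_ne_top_of_nonneg hq'.le hc
  have htail := (ENNReal.tendsto_sum_nat_add _ hsum).ennrpow_const (1 / q.toReal)
  rw [ENNReal.zero_rpow_of_pos (one_div_pos.2 hq')] at htail
  simpa only [lqNorm_of_ne_top hq] using htail

lemma lqNorm_mul_le [HolderTriple p σ θ] (hθ : θ ≠ 0) (c d : ι → ℝ≥0∞) :
    lqNorm θ (fun i => c i * d i) ≤ lqNorm p c * lqNorm σ d := by
  have hp0 : p ≠ 0 := (hθ.bot_lt.trans_le (HolderTriple.le p σ θ)).ne'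
  have hσ0 : σ ≠ 0 := (hθ.bot_lt.trans_le (HolderTriple.le σ p θ)).ne'
  rcases eq_or_ne p ∞ with rfl | hp
  · obtain rfl : σ = θ := HolderTriple.unique ∞ σ σ θ
    rw [← lqNorm_const_mul hθ]
    exact lqNorm_mono fun i => mul_le_mul_left (le_lqNorm hp0 c i) _
  rcases eq_or_ne σ ∞ with rfl | hσ
  · obtain rfl : p = θ := HolderTriple.unique p ∞ p θ
    rw [mul_comm, ← lqNorm_const_mul hθ]
    exact lqNorm_mono fun i => (mul_comm _ _).trans_le (mul_le_mul_left (le_lqNorm hσ0 d i) _)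
  have hpσ : Real.HolderTriple p.toReal σ.toReal θ.toReal :=
    HolderTriple.toReal θ (ENNReal.toReal_pos hp0 hp) (ENNReal.toReal_pos hσ0 hσ)
  have hθ' : θ ≠ ∞ := (ENNReal.toReal_pos_iff.1 hpσ.pos').2.ne
  let _ : MeasurableSpace ι := ⊤
  simpa only [lqNorm_of_ne_top hp, lqNorm_of_ne_top hσ, lqNorm_of_ne_top hθ', lintegral_count,
    Pi.mul_apply] using
    ENNReal.lintegral_Lp_mul_le_Lq_mul_Lr hpσ.pos' hpσ.lt hpσ.one_div_eq Measure.count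
      (measurable_from_top (f := c)).aemeasurable (measurable_from_top (f := d)).aemeasurable

end LqNorm

section LpNorm

variable {α ι κ ε : Type*} [MeasurableSpace α] {μ : Measure α} {p q ρ : ℝ≥0∞}

lemma eLpNorm_sum_measure [Countable ι] [ENorm ε] (hq : q ≠ 0) (f : α → ε) (μ : ι → Measure α) :
    eLpNorm f q (Measure.sum μ) = lqNorm q fun i => eLpNorm f q (μ i) := by
  rcases eq_or_ne q ∞ with rfl | hq'
  · simp only [lqNorm_top, eLpNorm_exponent_top]
    refine le_antisymm (essSup_le_of_ae_le _ (Measure.ae_sum_iff.2 fun i => ?_))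
      (iSup_le fun i => ?_)
    · filter_upwards [ae_le_eLpNormEssSup (f := f) (μ := μ i)] with x hx
      exact hx.trans (le_iSup (fun i => eLpNormEssSup f (μ i)) i)
    · exact essSup_mono_measure (Measure.absolutelyContinuous_of_le (Measure.le_sum μ i))
  · have hq0 : 0 < q.toReal := ENNReal.toReal_pos hq hq'
    simp only [lqNorm_of_ne_top hq', eLpNorm_eq_lintegral_rpow_enorm_toReal hq hq',
      lintegral_sum_measure, one_div, ENNReal.rpow_inv_rpow hq0.ne']

lemma lqNorm_eq_eLpNorm_count [Countable ι] [MeasurableSpace ι] [MeasurableSingletonClass ι]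
    (hq : q ≠ 0) (c : ι → ℝ≥0∞) : lqNorm q c = eLpNorm c q Measure.count := by
  rw [Measure.count, eLpNorm_sum_measure hq]
  simp [eLpNorm_dirac, hq]

lemma eLpNorm_restrict_iUnion [Countable ι] [ENorm ε] (hq : q ≠ 0) (f : α → ε) {s : ι → Set α}
    (hs : ∀ i, MeasurableSet (s i)) (hd : Pairwise (Function.onFun Disjoint s)) :
    eLpNorm f q (μ.restrict (⋃ i, s i)) = lqNorm q fun i => eLpNorm f q (μ.restrict (s i)) := by
  rw [Measure.restrict_iUnion hd hs, eLpNorm_sum_measure hq]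

lemma eLpNorm_tsum_le [Countable ι] (hp : 1 ≤ p) {f : ι → α → ℝ≥0∞}
    (hf : ∀ i, AEMeasurable (f i) μ) :
    eLpNorm (fun x => ∑' i, f i x) p μ ≤ ∑' i, eLpNorm (f i) p μ := by
  rcases eq_or_ne p ∞ with rfl | hp'
  · refine essSup_le_of_ae_le _ ?_
    filter_upwards [ae_all_iff.2 fun i => ae_le_eLpNormEssSup (f := f i) (μ := μ)] with x hx
    exact ENNReal.tsum_le_tsum hx
  have hp0 : p ≠ 0 := (one_pos.trans_le hp).ne'
  have hpr : 0 < p.toReal := ENNReal.toReal_pos hp0 hp'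
  have hfin (F : Finset ι) :
      ∫⁻ x, (∑ i ∈ F, f i x) ^ p.toReal ∂μ ≤ (∑' i, eLpNorm (f i) p μ) ^ p.toReal := by
    rw [← ENNReal.rpow_inv_le_iff hpr, ← one_div]
    calc (∫⁻ x, (∑ i ∈ F, f i x) ^ p.toReal ∂μ) ^ (1 / p.toReal)
        = eLpNorm (∑ i ∈ F, f i) p μ := by
          simp only [eLpNorm_eq_lintegral_rpow_enorm_toReal hp0 hp', enorm_eq_self,
            Finset.sum_apply]
      _ ≤ ∑ i ∈ F, eLpNorm (f i) p μ :=
          eLpNorm_sum_le (fun i _ => (hf i).aestronglyMeasurable) hp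
      _ ≤ ∑' i, eLpNorm (f i) p μ := ENNReal.sum_le_tsum F
  have hsup (x : α) :
      (∑' i, f i x) ^ p.toReal = ⨆ F : Finset ι, (∑ i ∈ F, f i x) ^ p.toReal := by
    rw [ENNReal.tsum_eq_iSup_sum]
    exact (ENNReal.orderIsoRpow _ hpr).map_iSup _
  have hdir : Directed (· ≤ ·) fun (F : Finset ι) x => (∑ i ∈ F, f i x) ^ p.toReal :=
    Monotone.directed_le fun F G hFG x =>
      ENNReal.rpow_le_rpow (Finset.sum_le_sum_of_subset hFG) hpr.le
  rw [eLpNorm_eq_lintegral_rpow_enorm_toReal hp0 hp', one_div, ENNReal.rpow_inv_le_iff hpr]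
  simp only [enorm_eq_self, hsup]
  rw [lintegral_iSup_directed (fun F => (F.aemeasurable_fun_sum fun i _ => hf i).pow_const _) hdir]
  exact iSup_le hfin

lemma eLpNorm_lqNorm_le [Countable ι] (hρ : ρ ≠ 0) (hρ' : ρ ≠ ∞) (hρp : ρ ≤ p) {f : ι → α → ℝ≥0∞}
    (hf : ∀ i, AEMeasurable (f i) μ) :
    eLpNorm (fun x => lqNorm ρ fun i => f i x) p μ ≤ lqNorm ρ fun i => eLpNorm (f i) p μ := by
  have hρ0 : 0 < ρ.toReal := ENNReal.toReal_pos hρ hρ'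
  have hp : p = p / ρ * ENNReal.ofReal ρ.toReal := by
    rw [ENNReal.ofReal_toReal hρ', ENNReal.div_mul_cancel hρ hρ']
  have hpow (g : α → ℝ≥0∞) :
      eLpNorm g p μ ^ ρ.toReal = eLpNorm (fun x => g x ^ ρ.toReal) (p / ρ) μ := by
    rw [hp, ← eLpNorm_enorm_rpow g hρ0, ← hp]
    simp only [enorm_eq_self]
  rw [← ENNReal.rpow_le_rpow_iff hρ0, hpow, lqNorm_rpow_toReal hρ hρ']
  simp only [lqNorm_rpow_toReal hρ hρ', hpow]
  exact eLpNorm_tsum_le ((ENNReal.le_div_iff_mul_le (.inl hρ) (.inl hρ')).2 (by rwa [one_mul]))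
    fun i => (hf i).pow_const _

lemma lqNorm_comm_le [Countable ι] [Countable κ] (hρ : ρ ≠ 0) (hρ' : ρ ≠ ∞) (hρp : ρ ≤ p)
    (f : ι → κ → ℝ≥0∞) :
    lqNorm p (fun j => lqNorm ρ fun i => f i j) ≤ lqNorm ρ fun i => lqNorm p (f i) := by
  let _ : MeasurableSpace κ := ⊤
  have hp : p ≠ 0 := (hρ.bot_lt.trans_le hρp).ne'
  simp only [lqNorm_eq_eLpNorm_count (ι := κ) hp]
  exact eLpNorm_lqNorm_le hρ hρ' hρp fun i => (measurable_from_top (f := f i)).aemeasurable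

lemma ae_ne_top_of_eLpNorm_ne_top (hp : p ≠ 0) {g : α → ℝ≥0∞} (hg : AEMeasurable g μ)
    (h : eLpNorm g p μ ≠ ∞) : ∀ᵐ x ∂μ, g x ≠ ∞ := by
  rcases eq_or_ne p ∞ with rfl | hp'
  · filter_upwards [ae_le_eLpNormEssSup (f := g) (μ := μ)] with x hx
    exact ne_top_of_le_ne_top h hx
  · have hpr : 0 < p.toReal := ENNReal.toReal_pos hp hp'
    have hint := lintegral_rpow_enorm_lt_top_of_eLpNorm_lt_top hp hp' h.lt_top
    simp only [enorm_eq_self] at hint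
    filter_upwards [ae_lt_top' (hg.pow_const _) hint.ne] with x hx
    exact (ENNReal.rpow_lt_top_iff_of_pos hpr).1 hx |>.ne

section Series

variable {E : Type*} [NormedAddCommGroup E] {f : ℕ → α → E}

lemma eLpNorm_tsum_enorm_le (hρ : ρ ≠ 0) (hρ1 : ρ ≤ 1) (hρp : ρ ≤ p)
    (hf : ∀ i, AEStronglyMeasurable (f i) μ) :
    eLpNorm (fun x => ∑' i, ‖f i x‖ₑ) p μ ≤ lqNorm ρ fun i => eLpNorm (f i) p μ :=
  calc eLpNorm (fun x => ∑' i, ‖f i x‖ₑ) p μ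
      ≤ eLpNorm (fun x => lqNorm ρ fun i => ‖f i x‖ₑ) p μ :=
        eLpNorm_mono_enorm fun x => tsum_le_lqNorm hρ hρ1 fun i => ‖f i x‖ₑ
    _ ≤ lqNorm ρ fun i => eLpNorm (fun x => ‖f i x‖ₑ) p μ :=
        eLpNorm_lqNorm_le hρ (ne_top_of_le_ne_top one_ne_top hρ1) hρp fun i => (hf i).enorm
    _ = lqNorm ρ fun i => eLpNorm (f i) p μ := by simp only [eLpNorm_enorm]

variable [CompleteSpace E]

lemma ae_summable_of_lqNorm_eLpNorm_ne_top (hρ : ρ ≠ 0) (hρ1 : ρ ≤ 1) (hρp : ρ ≤ p)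
    (hf : ∀ i, AEStronglyMeasurable (f i) μ) (h : (lqNorm ρ fun i => eLpNorm (f i) p μ) ≠ ∞) :
    ∀ᵐ x ∂μ, Summable fun i => f i x := by
  have hp : p ≠ 0 := (hρ.bot_lt.trans_le hρp).ne'
  filter_upwards [ae_ne_top_of_eLpNorm_ne_top hp (AEMeasurable.tsum fun i => (hf i).enorm)
    (ne_top_of_le_ne_top h (eLpNorm_tsum_enorm_le hρ hρ1 hρp hf))] with x hx
  exact Summable.of_enorm hx

lemma eLpNorm_tsum_sub_sum_range_le (hρ : ρ ≠ 0) (hρ1 : ρ ≤ 1) (hρp : ρ ≤ p)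
    (hf : ∀ i, AEStronglyMeasurable (f i) μ) (N : ℕ) :
    eLpNorm (fun x => ∑' i, f i x - ∑ i ∈ Finset.range N, f i x) p μ ≤
      lqNorm ρ fun i => eLpNorm (f (i + N)) p μ := by
  have hf' (i : ℕ) : AEStronglyMeasurable (f (i + N)) μ := hf (i + N)
  by_cases htop : (lqNorm ρ fun i => eLpNorm (f (i + N)) p μ) = ∞
  · exact htop ▸ le_top
  refine le_trans ?_ (eLpNorm_tsum_enorm_le hρ hρ1 hρp hf')
  refine eLpNorm_mono_enorm_ae ?_
  filter_upwards [ae_summable_of_lqNorm_eLpNorm_ne_top hρ hρ1 hρp hf' htop] with x hx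
  rw [← ((summable_nat_add_iff N).1 hx).sum_add_tsum_nat_add N, add_sub_cancel_left]
  exact enorm_tsum_le_tsum_enorm

end Series

end LpNorm

section Exponents

variable {p σ θ : ℝ≥0∞}

lemma holderTriple_mul_conjE_pTheta (hθ : θ ≠ 0) (hθp : θ ≤ p) :
    HolderTriple p (θ * conjE (pTheta p θ)) θ := by
  refine ⟨?_⟩
  rcases eq_or_ne θ ∞ with rfl | hθ'
  · obtain rfl : p = ∞ := top_le_iff.1 hθp
    simp [pTheta, conjE]
  · have hinv : (θ * conjE (pTheta p θ))⁻¹ = θ⁻¹ - p⁻¹ := by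
      rw [conjE, pTheta, if_neg fun h => hθ' h.1, ENNReal.mul_inv (.inl hθ) (.inl hθ'), inv_inv,
        ENNReal.inv_div (.inl hθ') (.inl hθ), ENNReal.mul_sub fun _ _ => ENNReal.inv_ne_top.2 hθ,
        mul_one, div_eq_mul_inv, ← mul_assoc, ENNReal.inv_mul_cancel hθ hθ', one_mul]
    rw [hinv, add_tsub_cancel_of_le (ENNReal.inv_le_inv.2 hθp)]

lemma one_div_toReal_eq_add [hpσ : HolderTriple p σ θ] (hθ : θ ≠ 0) :
    1 / θ.toReal = 1 / p.toReal + 1 / σ.toReal := by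
  have hp : p⁻¹ ≠ ∞ := ENNReal.inv_ne_top.2 (hθ.bot_lt.trans_le (HolderTriple.le p σ θ)).ne'
  have hσ : σ⁻¹ ≠ ∞ := ENNReal.inv_ne_top.2 (hθ.bot_lt.trans_le (HolderTriple.le σ p θ)).ne'
  simp only [one_div, ← ENNReal.toReal_inv, ← hpσ.inv_add_inv_eq_inv, ENNReal.toReal_add hp hσ]

end Exponents

section Dyadic

variable {n k : ℕ} {m : Fin n → ℤ} {p q σ : ℝ≥0∞}

lemma two_rpow_ne_zero (a : ℝ) : (2 : ℝ≥0∞) ^ a ≠ 0 := by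
  simp [ENNReal.rpow_eq_zero_iff]

lemma two_rpow_ne_top (a : ℝ) : (2 : ℝ≥0∞) ^ a ≠ ∞ := by
  simp [ENNReal.rpow_eq_top_iff]

lemma two_rpow_add (a b : ℝ) : (2 : ℝ≥0∞) ^ (a + b) = 2 ^ a * 2 ^ b :=
  ENNReal.rpow_add _ _ two_ne_zero ofNat_ne_top

lemma mem_dyadicCubeHalf {x : Rn n} : x ∈ dyadicCubeHalf n k m ↔ ∀ i, ⌊x i * 2 ^ k⌋ = m i := by
  have h2 : (0 : ℝ) < 2 ^ k := by positivity
  simp only [dyadicCubeHalf, Set.mem_ofPred_eq, Int.floor_eq_iff, div_le_iff₀ h2, lt_div_iff₀ h2]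

lemma dyadicCube_eq_pi : dyadicCube n k m =
    Set.univ.pi fun i => Set.Ioo ((m i : ℝ) / 2 ^ k) (((m i : ℝ) + 1) / 2 ^ k) := by
  ext x
  simp [dyadicCube, Set.mem_pi]

lemma dyadicCubeHalf_eq_pi : dyadicCubeHalf n k m =
    Set.univ.pi fun i => Set.Ico ((m i : ℝ) / 2 ^ k) (((m i : ℝ) + 1) / 2 ^ k) := by
  ext x
  simp [dyadicCubeHalf, Set.mem_pi]

lemma measurableSet_dyadicCubeHalf : MeasurableSet (dyadicCubeHalf n k m) :=
  dyadicCubeHalf_eq_pi ▸ MeasurableSet.univ_pi fun _ => measurableSet_Ico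

lemma restrict_dyadicCube (n k : ℕ) (m : Fin n → ℤ) :
    (volume : Measure (Rn n)).restrict (dyadicCube n k m) =
      volume.restrict (dyadicCubeHalf n k m) := by
  rw [dyadicCube_eq_pi, dyadicCubeHalf_eq_pi]
  exact Measure.restrict_congr_set ((Measure.univ_pi_Ioo_ae_eq_Icc (μ := fun _ => volume)).trans
    (Measure.univ_pi_Ico_ae_eq_Icc (μ := fun _ => volume)).symm)

lemma volume_dyadicCube (n k : ℕ) (m : Fin n → ℤ) :
    volume (dyadicCube n k m) = (2 : ℝ≥0∞) ^ (-((k * n : ℕ) : ℝ)) := by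
  have hside (i : Fin n) :
      ENNReal.ofReal (((m i : ℝ) + 1) / 2 ^ k - (m i : ℝ) / 2 ^ k) = ((2 : ℝ≥0∞) ^ k)⁻¹ := by
    rw [← sub_div, add_sub_cancel_left, one_div, ENNReal.ofReal_inv_of_pos (by positivity),
      ENNReal.ofReal_pow zero_le_two, ENNReal.ofReal_ofNat]
  rw [dyadicCube_eq_pi, Real.volume_pi_Ioo, Finset.prod_congr rfl fun i _ => hside i,
    Finset.prod_const, Finset.card_univ, Fintype.card_fin, ENNReal.rpow_neg, ENNReal.rpow_natCast,
    pow_mul, ENNReal.inv_pow (a := 2 ^ k)]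

lemma pairwise_disjoint_dyadicCubeHalf (n k : ℕ) :
    Pairwise (Function.onFun Disjoint (dyadicCubeHalf n k)) := fun _ _ hm =>
  Set.disjoint_left.2 fun _ hx hx' => hm <| funext fun i =>
    (mem_dyadicCubeHalf.1 hx i).symm.trans (mem_dyadicCubeHalf.1 hx' i)

/-- The index of the dyadic cube of level `k` containing the cube of level `k + d` and index `m`. -/
def dyadicParent {n : ℕ} (d : ℕ) (m : Fin n → ℤ) : Fin n → ℤ := fun i => m i / ((2 ^ d : ℕ) : ℤ)

lemma floor_mul_two_pow_add_ediv (x : ℝ) (k d : ℕ) :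
    ⌊x * 2 ^ (k + d)⌋ / ((2 ^ d : ℕ) : ℤ) = ⌊x * 2 ^ k⌋ := by
  rw [← Int.floor_div_natCast, Nat.cast_pow, Nat.cast_ofNat, pow_add, ← mul_assoc,
    mul_div_cancel_right₀ _ (by positivity)]

lemma iUnion_dyadicCubeHalf_children (n k d : ℕ) (m : Fin n → ℤ) :
    ⋃ i : {i // dyadicParent d i = m}, dyadicCubeHalf n (k + d) i = dyadicCubeHalf n k m := by
  ext x
  simp only [Set.mem_iUnion, mem_dyadicCubeHalf]
  constructor
  · rintro ⟨⟨m', rfl⟩, hx⟩ i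
    rw [← floor_mul_two_pow_add_ediv (x i) k d, hx i, dyadicParent]
  · exact fun hx => ⟨⟨fun i => ⌊x i * 2 ^ (k + d)⌋,
      funext fun i => (floor_mul_two_pow_add_ediv (x i) k d).trans (hx i)⟩, fun _ => rfl⟩

lemma eLpNorm_dyadicCube_eq_lqNorm_children {ε : Type*} [ENorm ε] (hq : q ≠ 0)
    (f : Rn n → ε) (k d : ℕ) (m : Fin n → ℤ) :
    eLpNorm f q (volume.restrict (dyadicCube n k m)) =
      lqNorm q fun i : {i // dyadicParent d i = m} =>
        eLpNorm f q (volume.restrict (dyadicCube n (k + d) i)) := by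
  simp only [restrict_dyadicCube]
  rw [← iUnion_dyadicCubeHalf_children n k d m]
  exact eLpNorm_restrict_iUnion hq f (fun _ => measurableSet_dyadicCubeHalf) fun i j hij =>
    pairwise_disjoint_dyadicCubeHalf n (k + d) (Subtype.coe_injective.ne hij)

lemma eLpNorm_dyadicCube_of_eqOn_const (hq : q ≠ 0) {f : Rn n → ℝ≥0∞} {c : ℝ≥0∞}
    (hf : ∀ x ∈ dyadicCubeHalf n k m, f x = c) :
    eLpNorm f q (volume.restrict (dyadicCube n k m)) = 2 ^ (-((k * n : ℕ) / q.toReal)) * c := by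
  have hμ : (volume : Measure (Rn n)).restrict (dyadicCube n k m) ≠ 0 := by
    rw [Ne, Measure.restrict_eq_zero, volume_dyadicCube]
    exact two_rpow_ne_zero _
  have hfc : f =ᵐ[volume.restrict (dyadicCube n k m)] fun _ => c := by
    rw [restrict_dyadicCube]
    exact (ae_restrict_mem measurableSet_dyadicCubeHalf).mono hf
  rw [eLpNorm_congr_ae hfc, eLpNorm_const _ hq hμ, Measure.restrict_apply_univ, volume_dyadicCube,
    ← ENNReal.rpow_mul, enorm_eq_self, mul_comm, mul_one_div, neg_div]

lemma avgNorm_eq_eLpNorm (hq : q ≠ 0) (Q : Set (Rn n)) (f : Rn n → ℝ≥0∞) :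
    avgNorm n k q Q f = 2 ^ ((k * n : ℕ) / q.toReal) * eLpNorm f q (volume.restrict Q) := by
  unfold avgNorm
  split_ifs with hq'
  · simp [hq', eLpNormEssSup]
  · rw [eLpNorm_eq_lintegral_rpow_enorm_toReal hq hq',
      ENNReal.mul_rpow_of_nonneg _ _ (by positivity), ← ENNReal.rpow_natCast,
      ← ENNReal.rpow_mul, mul_one_div]
    simp only [enorm_eq_self]

lemma tbarOf_of_mem {T : ℕ → (Fin n → ℤ) → ℝ≥0∞} {x : Rn n} (hx : x ∈ dyadicCubeHalf n k m) :
    tbarOf n p T k x = 2 ^ ((k * n : ℕ) / p.toReal) * T k m := by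
  have hne (m' : Fin n → ℤ) (hm : m' ≠ m) : x ∉ dyadicCubeHalf n k m' := fun hx' =>
    Set.disjoint_left.1 (pairwise_disjoint_dyadicCubeHalf n k hm) hx' hx
  rw [tbarOf, tsum_eq_single m fun m' hm => Set.indicator_of_notMem (hne m' hm) _,
    Set.indicator_of_mem hx]

lemma avgNorm_tbarOf (hp : p ≠ 0) (T : ℕ → (Fin n → ℤ) → ℝ≥0∞) (k : ℕ) (m : Fin n → ℤ) :
    avgNorm n k p (dyadicCube n k m) (tbarOf n p T k) = 2 ^ ((k * n : ℕ) / p.toReal) * T k m := by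
  rw [avgNorm_eq_eLpNorm hp, eLpNorm_dyadicCube_of_eqOn_const hp fun x => tbarOf_of_mem,
    ← mul_assoc, ← two_rpow_add, add_neg_cancel, ENNReal.rpow_zero, one_mul]

lemma avgNorm_inv_tbarOf (hσ : σ ≠ 0) (T : ℕ → (Fin n → ℤ) → ℝ≥0∞) (k d : ℕ) (m : Fin n → ℤ) :
    avgNorm n k σ (dyadicCube n k m) (fun x => (tbarOf n p T (k + d) x)⁻¹) =
      2 ^ (-((d * n : ℕ) / σ.toReal + ((k + d) * n : ℕ) / p.toReal)) *
        lqNorm σ fun i : {i // dyadicParent d i = m} => (T (k + d) i)⁻¹ := by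
  have hchild (i : Fin n → ℤ) (x : Rn n) (hx : x ∈ dyadicCubeHalf n (k + d) i) :
      (tbarOf n p T (k + d) x)⁻¹ = 2 ^ (-(((k + d) * n : ℕ) / p.toReal)) * (T (k + d) i)⁻¹ := by
    rw [tbarOf_of_mem hx, ENNReal.mul_inv (.inl (two_rpow_ne_zero _)) (.inl (two_rpow_ne_top _)),
      ENNReal.rpow_neg]
  rw [avgNorm_eq_eLpNorm hσ, eLpNorm_dyadicCube_eq_lqNorm_children hσ _ k d]
  simp only [eLpNorm_dyadicCube_of_eqOn_const hσ (hchild _), lqNorm_const_mul hσ]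
  rw [← mul_assoc, ← mul_assoc, ← two_rpow_add, ← two_rpow_add]
  congr 2
  push_cast
  ring

end Dyadic

section Telescoping

variable {n k d : ℕ} {p q r s σ θ ρ : ℝ≥0∞} {T : ℕ → (Fin n → ℤ) → ℝ≥0∞}

lemma avgNorm_tbarOf_mul_avgNorm_inv [HolderTriple p σ θ] (hθ : θ ≠ 0)
    (T : ℕ → (Fin n → ℤ) → ℝ≥0∞) (k d : ℕ) (m : Fin n → ℤ) :
    avgNorm n k p (dyadicCube n k m) (tbarOf n p T k) *
        avgNorm n k σ (dyadicCube n k m) (fun x => (tbarOf n p T (k + d) x)⁻¹) =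
      2 ^ (-((d * n : ℕ) / θ.toReal)) *
        (T k m * lqNorm σ fun i : {i // dyadicParent d i = m} => (T (k + d) i)⁻¹) := by
  rw [avgNorm_tbarOf (hθ.bot_lt.trans_le (HolderTriple.le p σ θ)).ne',
    avgNorm_inv_tbarOf (hθ.bot_lt.trans_le (HolderTriple.le σ p θ)).ne', mul_mul_mul_comm,
    ← two_rpow_add]
  congr 2
  rw [div_eq_mul_one_div _ θ.toReal, one_div_toReal_eq_add (p := p) (σ := σ) hθ]
  push_cast
  ring

lemma eLpNorm_dyadicCube_le_mul_lqNorm_children [HolderTriple p σ θ] (hθ : θ ≠ 0) (hθr : θ ≤ r)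
    (hT0 : ∀ k m, T k m ≠ 0) (hT : ∀ k m, T k m ≠ ∞) (v : Rn n → ℝ) (k d : ℕ) (m : Fin n → ℤ) :
    eLpNorm v r (volume.restrict (dyadicCube n k m)) ≤
      (lqNorm σ fun i : {i // dyadicParent d i = m} => (T (k + d) i)⁻¹) *
        lqNorm p fun i : {i // dyadicParent d i = m} =>
          T (k + d) i * eLpNorm v r (volume.restrict (dyadicCube n (k + d) i)) := by
  have _ : HolderTriple σ p θ := .symm
  rw [eLpNorm_dyadicCube_eq_lqNorm_children (hθ.bot_lt.trans_le hθr).ne' v k d]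
  refine (lqNorm_anti hθ hθr _).trans (le_trans (lqNorm_mono fun i => ?_) (lqNorm_mul_le hθ _ _))
  rw [← mul_assoc, ENNReal.inv_mul_cancel (hT0 _ _) (hT _ _), one_mul]

/-- The norm of `v` on the `k`-th dyadic level: the `ℓ_p` norm over `m` of
`2^{kn/s} T_{k,m} ‖v‖_{L_r(Q^n_{k,m})}`. -/
def levelNorm (n : ℕ) (p r s : ℝ≥0∞) (T : ℕ → (Fin n → ℤ) → ℝ≥0∞) (k : ℕ) (v : Rn n → ℝ) : ℝ≥0∞ :=
  lqNorm p fun m : Fin n → ℤ => (2 : ℝ≥0∞) ^ (((k * n : ℕ) : ℝ) / s.toReal) * T k m *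
    eLpNorm v r (volume.restrict (dyadicCube n k m))

lemma one_div_toReal_anti (hθ : θ ≠ 0) (hθs : θ ≤ s) : 1 / s.toReal ≤ 1 / θ.toReal := by
  simpa only [one_div, ENNReal.toReal_inv] using
    ENNReal.toReal_mono (ENNReal.inv_ne_top.2 hθ) (ENNReal.inv_le_inv.2 hθs)

lemma levelNorm_anti_scale (hθ : θ ≠ 0) (hθs : θ ≤ s) (v : Rn n → ℝ) :
    levelNorm n p r s T k v ≤ levelNorm n p r θ T k v := by
  refine lqNorm_mono fun m => ?_
  gcongr ?_ * _ * _
  refine ENNReal.rpow_le_rpow_of_exponent_le one_le_two ?_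
  simpa only [mul_one_div] using
    mul_le_mul_of_nonneg_left (one_div_toReal_anti hθ hθs) (Nat.cast_nonneg (k * n))

lemma levelNorm_zero (v : Rn n → ℝ) : levelNorm n p r s T 0 v =
    lqNorm p fun m => T 0 m * eLpNorm v r (volume.restrict (dyadicCube n 0 m)) := by
  simp [levelNorm]

lemma levelNorm_le_mul_levelNorm_add [HolderTriple p σ θ] (hθ : θ ≠ 0) (hθr : θ ≤ r)
    (hT0 : ∀ k m, T k m ≠ 0) (hT : ∀ k m, T k m ≠ ∞) {B : ℝ≥0∞}
    (hB : ∀ m, avgNorm n k p (dyadicCube n k m) (tbarOf n p T k) *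
      avgNorm n k σ (dyadicCube n k m) (fun x => (tbarOf n p T (k + d) x)⁻¹) ≤ B)
    (v : Rn n → ℝ) : levelNorm n p r θ T k v ≤ B * levelNorm n p r θ T (k + d) v := by
  have hp : p ≠ 0 := (hθ.bot_lt.trans_le (HolderTriple.le p σ θ)).ne'
  let S (m : Fin n → ℤ) := lqNorm σ fun i : {i // dyadicParent d i = m} => (T (k + d) i)⁻¹
  let c (i : Fin n → ℤ) := T (k + d) i * eLpNorm v r (volume.restrict (dyadicCube n (k + d) i))
  let L (m : Fin n → ℤ) := lqNorm p fun i : {i // dyadicParent d i = m} => c i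
  have hexp : ((k * n : ℕ) : ℝ) / θ.toReal =
      ((k + d) * n : ℕ) / θ.toReal + -((d * n : ℕ) / θ.toReal) := by
    push_cast
    ring
  have hcube (m : Fin n → ℤ) : 2 ^ (((k * n : ℕ) : ℝ) / θ.toReal) * T k m *
      eLpNorm v r (volume.restrict (dyadicCube n k m)) ≤
        B * (2 ^ ((((k + d) * n : ℕ) : ℝ) / θ.toReal) * L m) :=
    calc 2 ^ (((k * n : ℕ) : ℝ) / θ.toReal) * T k m *
          eLpNorm v r (volume.restrict (dyadicCube n k m))
        ≤ 2 ^ (((k * n : ℕ) : ℝ) / θ.toReal) * T k m * (S m * L m) := by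
          gcongr
          exact eLpNorm_dyadicCube_le_mul_lqNorm_children hθ hθr hT0 hT v k d m
      _ = 2 ^ (-((d * n : ℕ) / θ.toReal)) * (T k m * S m) *
          (2 ^ ((((k + d) * n : ℕ) : ℝ) / θ.toReal) * L m) := by
          rw [hexp, two_rpow_add]
          ring
      _ ≤ B * (2 ^ ((((k + d) * n : ℕ) : ℝ) / θ.toReal) * L m) := by
          gcongr
          exact (avgNorm_tbarOf_mul_avgNorm_inv hθ T k d m).symm.trans_le (hB m)
  refine (lqNorm_mono hcube).trans_eq ?_
  simp only [levelNorm, mul_assoc, lqNorm_const_mul hp, L, lqNorm_fiber hp _ c, c]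

lemma levelNorm_tsum_sub_sum_range_le (hρ : ρ ≠ 0) (hρ1 : ρ ≤ 1) (hρp : ρ ≤ p) (hρr : ρ ≤ r)
    {v : ℕ → Rn n → ℝ} (hv : ∀ i, Measurable (v i)) (N : ℕ) :
    levelNorm n p r s T k (fun x => ∑' i, v i x - ∑ i ∈ Finset.range N, v i x) ≤
      lqNorm ρ fun i => levelNorm n p r s T k (v (i + N)) := by
  refine (lqNorm_mono fun m => ?_).trans
    (lqNorm_comm_le hρ (ne_top_of_le_ne_top one_ne_top hρ1) hρp _)
  rw [lqNorm_const_mul hρ]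
  gcongr
  exact eLpNorm_tsum_sub_sum_range_le hρ hρ1 hρr (fun i => (hv i).aestronglyMeasurable) N

lemma lqNorm_le_mul_of_le_lqNorm_shift (hρ : ρ ≠ 0) (hρ' : ρ ≠ ∞) (hρq : ρ ≤ q)
    {a b w : ℕ → ℝ≥0∞} (h : ∀ k, b k ≤ lqNorm ρ fun i => w i * a (k + i)) :
    lqNorm q b ≤ lqNorm ρ w * lqNorm q a :=
  calc lqNorm q b
      ≤ lqNorm q fun k => lqNorm ρ fun i => w i * a (k + i) := lqNorm_mono h
    _ ≤ lqNorm ρ fun i => lqNorm q fun k => w i * a (k + i) := lqNorm_comm_le hρ hρ' hρq _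
    _ ≤ lqNorm ρ fun i => lqNorm q a * w i := by
        refine lqNorm_mono fun i => ?_
        rw [lqNorm_const_mul (hρ.bot_lt.trans_le hρq).ne', mul_comm]
        exact mul_le_mul_left (lqNorm_comp_le (add_left_injective i) a) _
    _ = lqNorm ρ w * lqNorm q a := by rw [lqNorm_const_mul hρ, mul_comm]

lemma lqNorm_lqNorm_levelNorm_shift_le [HolderTriple p σ θ] (hρ : ρ ≠ 0) (hρ' : ρ ≠ ∞) (hρq : ρ ≤ q)
    (hθ : θ ≠ 0) (hθr : θ ≤ r) (hT0 : ∀ k m, T k m ≠ 0) (hT : ∀ k m, T k m ≠ ∞)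
    {C₁ : ℝ≥0∞} {α₁ : ℝ} (hX : ∀ k j : ℕ, k ≤ j → ∀ m : Fin n → ℤ,
      avgNorm n k p (dyadicCube n k m) (tbarOf n p T k) *
        avgNorm n k σ (dyadicCube n k m) (fun x => (tbarOf n p T j x)⁻¹) ≤
        C₁ * (2 : ℝ≥0∞) ^ (α₁ * ((k : ℝ) - (j : ℝ))))
    (v : ℕ → Rn n → ℝ) :
    (lqNorm q fun k => lqNorm ρ fun i => levelNorm n p r θ T k (v (k + i))) ≤
      C₁ * (lqNorm ρ fun i : ℕ => 2 ^ (-(α₁ * i))) *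
        lqNorm q fun k => levelNorm n p r θ T k (v k) := by
  rw [← lqNorm_const_mul hρ]
  exact lqNorm_le_mul_of_le_lqNorm_shift hρ hρ' hρq fun k => lqNorm_mono fun i =>
    levelNorm_le_mul_levelNorm_add hθ hθr hT0 hT
      (fun m => (hX k (k + i) le_self_add m).trans_eq (by simp)) _

lemma lqNorm_geometric_ne_top (hρ : ρ ≠ 0) (hρ' : ρ ≠ ∞) {α : ℝ} (hα : 0 < α) :
    (lqNorm ρ fun i : ℕ => (2 : ℝ≥0∞) ^ (-(α * i))) ≠ ∞ := by
  have hρ0 : 0 < ρ.toReal := ENNReal.toReal_pos hρ hρ'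
  have hpow (i : ℕ) : ((2 : ℝ≥0∞) ^ (-(α * i))) ^ ρ.toReal = (2 ^ (-(α * ρ.toReal))) ^ i := by
    rw [← ENNReal.rpow_mul, ← ENNReal.rpow_natCast, ← ENNReal.rpow_mul]
    ring_nf
  have hlt : (2 : ℝ≥0∞) ^ (-(α * ρ.toReal)) < 1 :=
    ENNReal.rpow_lt_one_of_one_lt_of_neg one_lt_two (neg_neg_of_pos (mul_pos hα hρ0))
  rw [lqNorm_of_ne_top hρ']
  simp only [hpow, ENNReal.tsum_geometric]
  exact ENNReal.rpow_ne_top_of_nonneg (by positivity)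
    (ENNReal.inv_ne_top.2 (tsub_pos_of_lt hlt).ne')

lemma exists_finset_subset_iUnion_unit_cubes {K : Set (Rn n)} (hK : IsCompact K) :
    ∃ F : Finset (Fin n → ℤ), K ⊆ ⋃ m : F, dyadicCubeHalf n 0 m := by
  obtain ⟨R, hR⟩ := hK.isBounded.exists_norm_le
  refine ⟨Fintype.piFinset fun _ => Finset.Icc ⌊-R⌋ ⌊R⌋, fun x hx => ?_⟩
  have hxR (i : Fin n) : |x i| ≤ R := (norm_le_pi_norm x i).trans (hR x hx)
  refine Set.mem_iUnion.2
    ⟨⟨fun i => ⌊x i⌋, Fintype.mem_piFinset.2 fun i => Finset.mem_Icc.2 ?_⟩, ?_⟩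
  · exact ⟨Int.floor_mono (abs_le.1 (hxR i)).1, Int.floor_mono (abs_le.1 (hxR i)).2⟩
  · simp [mem_dyadicCubeHalf]

section LocalConvergence

variable {v : ℕ → Rn n → ℝ}

lemma lqNorm_eLpNorm_compact_ne_top (hρ : ρ ≠ 0) (hρ' : ρ ≠ ∞) (hρr : ρ ≤ r)
    (h : ∀ m, (lqNorm ρ fun i => eLpNorm (v i) r (volume.restrict (dyadicCube n 0 m))) ≠ ∞)
    {K : Set (Rn n)} (hK : IsCompact K) :
    (lqNorm ρ fun i => eLpNorm (v i) r (volume.restrict K)) ≠ ∞ := by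
  have hr : r ≠ 0 := (hρ.bot_lt.trans_le hρr).ne'
  obtain ⟨F, hF⟩ := exists_finset_subset_iUnion_unit_cubes hK
  have hcover (i : ℕ) : eLpNorm (v i) r (volume.restrict K) ≤
      lqNorm ρ fun m : F => eLpNorm (v i) r (volume.restrict (dyadicCube n 0 m)) :=
    calc eLpNorm (v i) r (volume.restrict K)
        ≤ eLpNorm (v i) r (volume.restrict (⋃ m : F, dyadicCubeHalf n 0 m)) :=
          eLpNorm_mono_measure _ (Measure.restrict_mono hF le_rfl)
      _ = lqNorm r fun m : F => eLpNorm (v i) r (volume.restrict (dyadicCube n 0 m)) := by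
          simp only [restrict_dyadicCube]
          exact eLpNorm_restrict_iUnion hr _ (fun _ => measurableSet_dyadicCubeHalf) fun _ _ hm =>
            pairwise_disjoint_dyadicCubeHalf n 0 (Subtype.coe_injective.ne hm)
      _ ≤ _ := lqNorm_anti hρ hρr _
  exact ne_top_of_le_ne_top (lqNorm_ne_top_of_finite hρ fun m : F => h m)
    ((lqNorm_mono hcover).trans (lqNorm_comm_le hρ hρ' le_rfl _))

lemma memLrLoc_tsum (hρ : ρ ≠ 0) (hρ1 : ρ ≤ 1) (hρr : ρ ≤ r) (hv : ∀ i, Measurable (v i))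
    (h : ∀ m, (lqNorm ρ fun i => eLpNorm (v i) r (volume.restrict (dyadicCube n 0 m))) ≠ ∞) :
    MemLrLoc n r fun x => ∑' i, v i x := by
  refine ⟨Measurable.tsum hv, fun K hK => ?_⟩
  refine lt_of_le_of_lt ?_ (lqNorm_eLpNorm_compact_ne_top hρ (ne_top_of_le_ne_top one_ne_top hρ1)
    hρr h hK).lt_top
  simpa using eLpNorm_tsum_sub_sum_range_le hρ hρ1 hρr
    (fun i => (hv i).aestronglyMeasurable (μ := volume.restrict K)) 0

lemma tendsto_eLpNorm_sum_range_sub_tsum (hρ : ρ ≠ 0) (hρ1 : ρ ≤ 1) (hρr : ρ ≤ r)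
    (hv : ∀ i, Measurable (v i))
    (h : ∀ m, (lqNorm ρ fun i => eLpNorm (v i) r (volume.restrict (dyadicCube n 0 m))) ≠ ∞)
    {K : Set (Rn n)} (hK : IsCompact K) :
    Tendsto (fun N => eLpNorm (fun x => (∑ i ∈ Finset.range N, v i x) - ∑' i, v i x) r
      (volume.restrict K)) atTop (nhds 0) := by
  have hρ' : ρ ≠ ∞ := ne_top_of_le_ne_top one_ne_top hρ1
  refine tendsto_of_tendsto_of_tendsto_of_le_of_le tendsto_const_nhds
    (tendsto_lqNorm_add_atTop hρ hρ' (lqNorm_eLpNorm_compact_ne_top hρ hρ' hρr h hK))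
    (fun _ => zero_le) fun N => ?_
  refine le_of_eq_of_le (eLpNorm_sub_comm (fun x => ∑ i ∈ Finset.range N, v i x)
    (fun x => ∑' i, v i x) r _) ?_
  exact eLpNorm_tsum_sub_sum_range_le hρ hρ1 hρr (fun i => (hv i).aestronglyMeasurable) N

end LocalConvergence

lemma sum_range_succ_vseq (V : ℕ → Rn n → ℝ) (k : ℕ) (x : Rn n) :
    ∑ i ∈ Finset.range (k + 1), vseq V i x = V k x := by
  induction k with
  | zero => simp [vseq]
  | succ k ih => rw [Finset.sum_range_succ, ih]; simp [vseq]

lemma measurable_vseq {V : ℕ → Rn n → ℝ} (hV : ∀ k, Measurable (V k)) (k : ℕ) :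
    Measurable (vseq V k) := by
  unfold vseq
  split_ifs
  · exact hV 0
  · exact (hV k).sub (hV (k - 1))

lemma levelNorm_tsum_vseq_sub_le (hρ : ρ ≠ 0) (hρ1 : ρ ≤ 1) (hρp : ρ ≤ p) (hρr : ρ ≤ r)
    {V : ℕ → Rn n → ℝ} (hV : ∀ k, Measurable (V k)) (k : ℕ) :
    levelNorm n p r s T k (fun x => ∑' i, vseq V i x - V k x) ≤
      lqNorm ρ fun i => levelNorm n p r s T k (vseq V (k + i)) := by
  have hshift (i : ℕ) : i + (k + 1) = k + (i + 1) := by ring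
  have htail := levelNorm_tsum_sub_sum_range_le (s := s) (k := k) (T := T) hρ hρ1 hρp hρr
    (measurable_vseq hV) (k + 1)
  simp only [sum_range_succ_vseq, hshift] at htail
  exact htail.trans <|
    lqNorm_comp_le (add_left_injective 1) fun i => levelNorm n p r s T k (vseq V (k + i))

lemma lqNorm_eLpNorm_unit_cube_ne_top (hρ : ρ ≠ 0) (hp : p ≠ 0) (hT0 : ∀ m, T 0 m ≠ 0)
    {v : ℕ → Rn n → ℝ} (h : (lqNorm ρ fun i => levelNorm n p r s T 0 (v i)) ≠ ∞)
    (m : Fin n → ℤ) :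
    (lqNorm ρ fun i => eLpNorm (v i) r (volume.restrict (dyadicCube n 0 m))) ≠ ∞ := by
  have hle : T 0 m * (lqNorm ρ fun i => eLpNorm (v i) r (volume.restrict (dyadicCube n 0 m))) ≤
      lqNorm ρ fun i => levelNorm n p r s T 0 (v i) := by
    simp only [← lqNorm_const_mul hρ, levelNorm_zero]
    exact lqNorm_mono fun i =>
      le_lqNorm hp (fun m => T 0 m * eLpNorm (v i) r (volume.restrict (dyadicCube n 0 m))) m
  exact fun htop => h (top_le_iff.1 (by simpa [htop, hT0 m] using hle))

end Telescoping

lemma tkm_ne_top {n : ℕ} {p : ℝ≥0∞} {t : ℕ → Rn n → ℝ} (ht : pAdmissible n p t) (k : ℕ)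
    (m : Fin n → ℤ) : tkm n p t k m ≠ ∞ := by
  have hsub : dyadicCube n k m ⊆
      Set.Icc (fun i => (m i : ℝ) / 2 ^ k) fun i => ((m i : ℝ) + 1) / 2 ^ k := fun x hx =>
    ⟨fun i => (hx i).1.le, fun i => (hx i).2.le⟩
  exact ne_top_of_le_ne_top ((ht k).2.2 _ isCompact_Icc).ne
    (eLpNorm_mono_measure _ (Measure.restrict_mono hsub le_rfl))

theorem telescoping_series_general {n : ℕ} {p q r s σ θ : ℝ≥0∞} [HolderTriple p σ θ] (hq : q ≠ 0)
    (hθ : θ ≠ 0) (hθr : θ ≤ r) (hθs : θ ≤ s) {α₁ : ℝ} (hα₁ : 0 < α₁)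
    {T : ℕ → (Fin n → ℤ) → ℝ≥0∞} (hT0 : ∀ k m, T k m ≠ 0) (hT : ∀ k m, T k m ≠ ∞)
    {C₁ : ℝ≥0∞} (hC₁ : C₁ ≠ ∞)
    (hX : ∀ k j : ℕ, k ≤ j → ∀ m : Fin n → ℤ,
      avgNorm n k p (dyadicCube n k m) (tbarOf n p T k) *
        avgNorm n k σ (dyadicCube n k m) (fun x => (tbarOf n p T j x)⁻¹) ≤
        C₁ * (2 : ℝ≥0∞) ^ (α₁ * ((k : ℝ) - (j : ℝ)))) :
    ∃ C : ℝ≥0∞, 0 < C ∧ C < ∞ ∧ ∀ V : ℕ → Rn n → ℝ, (∀ k, Measurable (V k)) →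
      lqNorm q (fun k => levelNorm n p r θ T k (vseq V k)) < ∞ →
      ∃ φ : Rn n → ℝ, MemLrLoc n r φ ∧
        (∀ K : Set (Rn n), IsCompact K →
          Tendsto (fun N => eLpNorm (fun x => (∑ k ∈ Finset.range N, vseq V k x) - φ x) r
            (volume.restrict K)) atTop (nhds 0)) ∧
        lqNorm q (fun k => levelNorm n p r s T k (fun x => φ x - V k x)) +
            lqNorm p (fun m => T 0 m * eLpNorm φ r (volume.restrict (dyadicCube n 0 m))) ≤
          C * lqNorm q (fun k => levelNorm n p r θ T k (vseq V k)) := by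
  obtain ⟨ρ, hρ, hρ1, hρq, hρθ⟩ : ∃ ρ : ℝ≥0∞, ρ ≠ 0 ∧ ρ ≤ 1 ∧ ρ ≤ q ∧ ρ ≤ θ :=
    ⟨min 1 (min q θ), by simp [hq, hθ], by simp, by simp, by simp⟩
  have hρ' : ρ ≠ ∞ := ne_top_of_le_ne_top one_ne_top hρ1
  have hρp : ρ ≤ p := hρθ.trans (HolderTriple.le p σ θ)
  have hρr : ρ ≤ r := hρθ.trans hθr
  set W := C₁ * lqNorm ρ fun i : ℕ => 2 ^ (-(α₁ * i))
  have hW' : W ≠ ∞ := ENNReal.mul_ne_top hC₁ (lqNorm_geometric_ne_top hρ hρ' hα₁)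
  refine ⟨2 * W + 1, by positivity, by finiteness, fun V hV hA => ?_⟩
  set A := lqNorm q fun k => levelNorm n p r θ T k (vseq V k)
  have hv : ∀ k, Measurable (vseq V k) := measurable_vseq hV
  let b (k : ℕ) := lqNorm ρ fun i => levelNorm n p r θ T k (vseq V (k + i))
  have hb : lqNorm q b ≤ W * A :=
    lqNorm_lqNorm_levelNorm_shift_le hρ hρ' hρq hθ hθr hT0 hT hX (vseq V)
  have hb₀ : (lqNorm ρ fun i => levelNorm n p r θ T 0 (vseq V i)) ≤ W * A := by
    simpa [b] using (le_lqNorm hq b 0).trans hb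
  have hloc := lqNorm_eLpNorm_unit_cube_ne_top hρ (hρ.bot_lt.trans_le hρp).ne' (hT0 0)
    (ne_top_of_le_ne_top (by finiteness) hb₀)
  refine ⟨fun x => ∑' i, vseq V i x, memLrLoc_tsum hρ hρ1 hρr hv hloc,
    fun K hK => tendsto_eLpNorm_sum_range_sub_tsum hρ hρ1 hρr hv hloc hK, ?_⟩
  have hdiff :
      (lqNorm q fun k => levelNorm n p r s T k fun x => ∑' i, vseq V i x - V k x) ≤ W * A :=
    (lqNorm_mono fun k => (levelNorm_anti_scale hθ hθs _).trans
      (levelNorm_tsum_vseq_sub_le hρ hρ1 hρp hρr hV k)).trans hb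
  have hlim : levelNorm n p r θ T 0 (fun x => ∑' i, vseq V i x) ≤ W * A := by
    refine le_trans ?_ hb₀
    simpa using levelNorm_tsum_sub_sum_range_le (s := θ) (T := T) (k := 0) hρ hρ1 hρp hρr hv 0
  rw [← levelNorm_zero (s := θ)]
  calc _ ≤ W * A + W * A := add_le_add hdiff hlim
    _ = 2 * W * A := by ring
    _ ≤ (2 * W + 1) * A := mul_le_mul_left le_self_add A

/-- **Theorem 4.3: convergence of telescoping series and the corresponding estimate.** -/
theorem telescoping_series (n : ℕ) (hn : 0 < n) (p q r θ : ℝ≥0∞)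
    (hp : 0 < p) (hq : 0 < q) (hr : 0 < r)
    (hθ0 : 0 < θ) (hθp : θ ≤ p) (hθr : θ ≤ r)
    (α₁ α₂ α₃ : ℝ) (hα₃ : 0 ≤ α₃)
    (hα₁ : (n : ℝ) * (1 / θ.toReal - 1 / r.toReal) < α₁)
    (σ₂ : ℝ≥0∞) (hσ₂ : 0 < σ₂) (t : ℕ → Rn n → ℝ)
    (ht : MemX n α₁ α₂ α₃ (θ * conjE (pTheta p θ)) σ₂ p t) :
    ∃ C : ℝ≥0∞, 0 < C ∧ C < ∞ ∧
      ∀ V : ℕ → Rn n → ℝ, (∀ k, MemLrLoc n r (V k)) →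
        lqNorm q (fun k : ℕ => lqNorm p (fun m : Fin n → ℤ =>
            (2 : ℝ≥0∞) ^ (((k * n : ℕ) : ℝ) / θ.toReal) * tkm n p t k m *
              eLpNorm (vseq V k) r (volume.restrict (dyadicCube n k m)))) < ∞ →
        ∃ φ : Rn n → ℝ, MemLrLoc n r φ ∧
          (∀ K : Set (Rn n), IsCompact K →
            Filter.Tendsto (fun N : ℕ =>
                eLpNorm (fun x => (∑ k ∈ Finset.range N, vseq V k x) - φ x) r
                  (volume.restrict K)) Filter.atTop (nhds 0)) ∧
          lqNorm q (fun k : ℕ => lqNorm p (fun m : Fin n → ℤ =>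
              (2 : ℝ≥0∞) ^ (((k * n : ℕ) : ℝ) / r.toReal) * tkm n p t k m *
                eLpNorm (fun x => φ x - V k x) r (volume.restrict (dyadicCube n k m)))) +
            lqNorm p (fun m : Fin n → ℤ =>
              tkm n p t 0 m * eLpNorm φ r (volume.restrict (dyadicCube n 0 m))) ≤
          C * lqNorm q (fun k : ℕ => lqNorm p (fun m : Fin n → ℤ =>
              (2 : ℝ≥0∞) ^ (((k * n : ℕ) : ℝ) / θ.toReal) * tkm n p t k m *
                eLpNorm (vseq V k) r (volume.restrict (dyadicCube n k m)))) := by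
  obtain ⟨hadm, ⟨C₁, -, hC₁, hX⟩, -, hpos⟩ := ht
  have hα₁' : 0 < α₁ := (mul_nonneg n.cast_nonneg
    (sub_nonneg.2 (one_div_toReal_anti hθ0.ne' hθr))).trans_lt hα₁
  have _ : HolderTriple p (θ * conjE (pTheta p θ)) θ := holderTriple_mul_conjE_pTheta hθ0.ne' hθp
  obtain ⟨C, hC0, hC, h⟩ := telescoping_series_general (s := r) hq.ne' hθ0.ne' hθr hθr hα₁'
    (fun k m => (hpos k m m fun _ => by simp).1.ne') (tkm_ne_top hadm) hC₁.ne hX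
  exact ⟨C, hC0, hC, fun V hV => h V fun k => (hV k).1⟩

end
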